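/- Under the hypotheses in the context, suppose x ∈ P satisfies φ_t(x) ≥ 0 for every t ∈ T. Then there exist finitely many points q_1,…,q_r ∈ ℚ^d, each lying in P and satisfying φ_t(q_i) ≥ 0 for all t ∈ T and all 1 ≤ i ≤ r, and positive real numbers a_1,…,a_r with ∑_{i=1}^r a_i = 1 and x = ∑_{i=1}^r a_i·q_i; moreover, there exists a positive integer m' such that m'·φ_t(q_i) ∈ ℤ for every t ∈ T and every 1 ≤ i ≤ r. -/

import Mathlib

/-! A real point `y` of a rational polyhedron is a convex combination of rational points: express
`y` through a `ℚ`-basis of the `ℚ`-span of its coordinates and move the basis elements to nearby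
rationals. A rational inequality that is an equality at `y` then holds identically, and a strict one
survives a small move. Infinitely many inequalities reduce to finitely many by Dickson's lemma:
on the simplex of barycentric coordinates, an inequality follows from any other with smaller
coefficients, and coefficients bounded below with a common denominator are well-quasi-ordered. -/

open Topology Set

theorem affineMap_linearCombination {𝕜 E ι : Type*} [Ring 𝕜] [AddCommGroup E] [Module 𝕜 E]
    [Fintype ι] (f : E →ᵃ[𝕜] 𝕜) (v : ι → E) {w : ι → 𝕜} (hw : ∑ i, w i = 1) :
    f (Fintype.linearCombination 𝕜 v w) = w ⬝ᵥ fun i => f (v i) := by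
  rw [Fintype.linearCombination_apply, ← Finset.affineCombination_eq_linear_combination _ v w hw,
    Finset.map_affineCombination _ _ _ hw,
    Finset.affineCombination_eq_linear_combination _ _ w hw]
  rfl

section ConvexHull

variable {𝕜 E ι : Type*} [Field 𝕜] [LinearOrder 𝕜] [IsStrictOrderedRing 𝕜]

theorem mem_convexHull_of_mem_nhds_of_dense [TopologicalSpace 𝕜] [OrderTopology 𝕜]
    {s D : Set 𝕜} {x : 𝕜} (hs : s ∈ 𝓝 x) (hD : Dense D) :
    x ∈ convexHull 𝕜 (s ∩ D) := by
  obtain ⟨a, b, hx, hab⟩ := mem_nhds_iff_exists_Ioo_subset.1 hs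
  obtain ⟨l, hlD, hal, hlx⟩ := hD.exists_between hx.1
  obtain ⟨u, huD, hxu, hub⟩ := hD.exists_between hx.2
  apply segment_subset_convexHull (s := s ∩ D) (x := l) (y := u)
    ⟨hab ⟨hal, hlx.trans hx.2⟩, hlD⟩ ⟨hab ⟨hx.1.trans hxu, hub⟩, huD⟩
  rw [segment_eq_Icc (hlx.trans hxu).le]
  exact ⟨hlx.le, hxu.le⟩

theorem mem_convexHull_pi_of_mem_nhds_of_dense [TopologicalSpace 𝕜] [OrderTopology 𝕜]
    {κ : Type*} [Finite κ] {N : Set (κ → 𝕜)} {b : κ → 𝕜} {D : κ → Set 𝕜}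
    (hN : N ∈ 𝓝 b) (hD : ∀ k, Dense (D k)) :
    b ∈ convexHull 𝕜 (N ∩ univ.pi D) := by
  rw [nhds_pi, Filter.mem_pi] at hN
  obtain ⟨I, -, s, hs, hsN⟩ := hN
  have hb : b ∈ convexHull 𝕜 (univ.pi fun k => s k ∩ D k) := by
    rw [convexHull_pi]
    exact fun k _ => mem_convexHull_of_mem_nhds_of_dense (hs k) (hD k)
  refine convexHull_mono (subset_inter ?_ ?_) hb
  · exact fun c hc => hsN fun k _ => (hc k trivial).1
  · exact pi_mono fun k _ => inter_subset_right

variable [AddCommGroup E] [Module 𝕜 E]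

theorem mem_convexHull_image_inv_smul {s : Set E} {x : E} (f : E →ₗ[𝕜] 𝕜)
    (hx : x ∈ convexHull 𝕜 s) (hfx : f x = 1) (hf : ∀ y ∈ s, 0 < f y) :
    x ∈ convexHull 𝕜 ((fun y => (f y)⁻¹ • y) '' s) := by
  obtain ⟨κ, _, w, y, hw, -, hy, rfl⟩ := mem_convexHull_iff_exists_fintype.1 hx
  refine mem_convexHull_of_exists_fintype (fun k => w k * f (y k)) (fun k => (f (y k))⁻¹ • y k)
    (fun k => mul_nonneg (hw k) (hf _ (hy k)).le) ?_ (fun k => mem_image_of_mem _ (hy k)) ?_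
  · simpa only [map_sum, map_smul, smul_eq_mul] using hfx
  · refine Finset.sum_congr rfl fun k _ => ?_
    rw [smul_smul, mul_assoc, mul_inv_cancel₀ (hf _ (hy k)).ne', mul_one]

theorem convexHull_range_eq_image_stdSimplex [Fintype ι] (v : ι → E) :
    convexHull 𝕜 (range v) = Fintype.linearCombination 𝕜 v '' stdSimplex 𝕜 ι := by
  classical
  rw [← convexHull_rangle_single_eq_stdSimplex, LinearMap.image_convexHull, ← range_comp]
  congr 2
  ext i
  simp

theorem exists_fin_pos_convexCombination {s : Set E} {x : E} (hx : x ∈ convexHull 𝕜 s) :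
    ∃ (r : ℕ) (q : Fin r → E) (a : Fin r → 𝕜),
      (∀ i, q i ∈ s) ∧ (∀ i, 0 < a i) ∧ ∑ i, a i = 1 ∧ x = ∑ i, a i • q i := by
  obtain ⟨κ, _, q, a, hq, -, ha, hsum, rfl⟩ := eq_pos_convex_span_of_mem_convexHull hx
  let e := (Fintype.equivFin κ).symm
  exact ⟨Fintype.card κ, q ∘ e, a ∘ e, fun i => hq (mem_range_self _), fun i => ha _,
    (e.sum_comp a).trans hsum, (e.sum_comp fun k => a k • q k).symm⟩

end ConvexHull

section RationalPoints

theorem convexHull_rat_subset_convexHull_real {F : Type*} [AddCommGroup F] [Module ℝ F]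
    [Module ℚ F] (s : Set F) : convexHull ℚ s ⊆ convexHull ℝ s :=
  convexHull_min (subset_convexHull ℝ s) ((convex_convexHull ℝ s).lift ℚ)

theorem exists_rat_coords_of_mem_convexHull {κ : Type*} {s : Set (κ → ℝ)}
    (hs : ∀ x ∈ s, ∃ q : κ → ℚ, (fun k => (q k : ℝ)) = x) {x : κ → ℝ} (hx : x ∈ convexHull ℚ s) :
    ∃ q : κ → ℚ, (fun k => (q k : ℝ)) = x :=
  convexHull_min (t := (LinearMap.range ((Algebra.linearMap ℚ ℝ).compLeft κ) : Set (κ → ℝ))) hs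
    (Submodule.convex _) hx

end RationalPoints

section RationalFunctionals

/-- The rational points of the real dual of a `ℚ`-vector space `M`, where the real dual is
encoded as `M →ₗ[ℚ] ℝ`; they serve to approximate an arbitrary real functional on `M`. -/
def rationalFunctionals (M : Type*) [AddCommGroup M] [Module ℚ M] : Set (M →ₗ[ℚ] ℝ) :=
  {h | ∀ a, h a ∈ range ((↑) : ℚ → ℝ)}

variable {M : Type*} [AddCommGroup M] [Module ℚ M]

theorem constr_mem_rationalFunctionals {κ : Type*} [Finite κ] (B : Module.Basis κ ℚ M)
    {c : κ → ℝ} (hc : ∀ k, c k ∈ range ((↑) : ℚ → ℝ)) :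
    B.constr ℝ c ∈ rationalFunctionals M := by
  have := Fintype.ofFinite κ
  choose q hq using hc
  refine fun a => ⟨∑ k, B.repr a k * q k, ?_⟩
  simp [Module.Basis.constr_apply_fintype, Rat.smul_def, hq]

theorem eventually_sign_constr_eq {κ : Type*} [Finite κ] (B : Module.Basis κ ℚ M)
    {f : M →ₗ[ℚ] ℝ} (hf : Function.Injective f) (a : M) :
    ∀ᶠ c in 𝓝 fun k => f (B k), SignType.sign (B.constr ℝ c a) = SignType.sign (f a) := by
  have := Fintype.ofFinite κ
  rcases eq_or_ne a 0 with rfl | ha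
  · simp
  have hcont : Continuous fun c : κ → ℝ => B.constr ℝ c a := by
    simp only [Module.Basis.constr_apply_fintype]
    fun_prop
  have hlim := hcont.tendsto fun k => f (B k)
  rw [B.constr_self] at hlim
  have hsign := (continuousAt_sign_of_ne_zero ((map_ne_zero_iff f hf).2 ha)).tendsto.comp hlim
  rwa [nhds_discrete SignType, Filter.tendsto_pure] at hsign

theorem mem_convexHull_rationalFunctionals_sign_eq_of_injective [Module.Finite ℚ M]
    {f : M →ₗ[ℚ] ℝ} (hf : Function.Injective f) {A : Set M} (hA : A.Finite) :
    f ∈ convexHull ℝ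
      {h ∈ rationalFunctionals M | ∀ a ∈ A, SignType.sign (h a) = SignType.sign (f a)} := by
  let B := Module.finBasis ℚ M
  have hN := (Filter.eventually_all_finite hA).2 fun a _ => eventually_sign_constr_eq B hf a
  have hfB := mem_image_of_mem (B.constr ℝ).toLinearMap
    (mem_convexHull_pi_of_mem_nhds_of_dense hN fun _ => Rat.denseRange_cast)
  rw [LinearMap.image_convexHull, LinearEquiv.coe_coe, B.constr_self] at hfB
  refine convexHull_mono ?_ hfB
  rintro _ ⟨c, ⟨hsign, hc⟩, rfl⟩
  exact ⟨constr_mem_rationalFunctionals B fun k => hc k trivial, hsign⟩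

theorem mem_convexHull_rationalFunctionals_sign_eq [Module.Finite ℚ M] (f : M →ₗ[ℚ] ℝ)
    {A : Set M} (hA : A.Finite) :
    f ∈ convexHull ℝ
      {h ∈ rationalFunctionals M | ∀ a ∈ A, SignType.sign (h a) = SignType.sign (f a)} := by
  have hf := mem_image_of_mem (LinearMap.lcomp ℝ ℝ f.rangeRestrict)
    (mem_convexHull_rationalFunctionals_sign_eq_of_injective
      (LinearMap.range f).subtype_injective (hA.image f.rangeRestrict))
  rw [LinearMap.image_convexHull] at hf
  refine convexHull_mono ?_ hf
  rintro _ ⟨h, ⟨hrat, hsign⟩, rfl⟩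
  exact ⟨fun a => hrat _, fun a ha => hsign _ (mem_image_of_mem _ ha)⟩

theorem mem_convexHull_rationalFunctionals_nonneg [Module.Finite ℚ M] {f : M →ₗ[ℚ] ℝ} {u : M}
    (hu : f u = 1) {A : Set M} (hA : A.Finite) (hf : ∀ a ∈ A, 0 ≤ f a) :
    f ∈ convexHull ℝ {h ∈ rationalFunctionals M | h u = 1 ∧ ∀ a ∈ A, 0 ≤ h a} := by
  have hpos : ∀ h : M →ₗ[ℚ] ℝ, SignType.sign (h u) = SignType.sign (f u) → 0 < h u := fun h hh => by
    rwa [hu, sign_one, sign_eq_one_iff] at hh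
  have hfhull := mem_convexHull_image_inv_smul (LinearMap.applyₗ' ℝ u)
    (mem_convexHull_rationalFunctionals_sign_eq f (hA.insert u)) hu
    fun h hh => hpos h (hh.2 u (mem_insert u A))
  refine convexHull_mono ?_ hfhull
  rintro _ ⟨h, ⟨hrat, hsign⟩, rfl⟩
  have hhu := hpos h (hsign u (mem_insert u A))
  refine ⟨fun a => ?_, inv_mul_cancel₀ hhu.ne', fun a ha => ?_⟩
  · obtain ⟨⟨p, hp⟩, ⟨q, hq⟩⟩ := And.intro (hrat u) (hrat a)
    exact ⟨p⁻¹ * q, by simp [hp, hq]⟩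
  · have hha : 0 ≤ h a := by
      rw [← sign_nonneg_iff, hsign a (mem_insert_of_mem u ha), sign_nonneg_iff]
      exact hf a ha
    exact mul_nonneg (inv_nonneg.2 hhu.le) hha

end RationalFunctionals

theorem exists_finite_subset_forall_exists_le {α : Type*} [PartialOrder α] {s : Set α}
    (hs : s.IsPWO) : ∃ A ⊆ s, A.Finite ∧ ∀ b ∈ s, ∃ a ∈ A, a ≤ b := by
  have hmin : {a | Minimal (· ∈ s) a} ⊆ s := fun _ ha => ha.prop
  refine ⟨_, hmin, (setOfPred_minimal_antichain _).finite_of_partiallyWellOrderedOn (hs.mono hmin),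
    fun b hb => ?_⟩
  obtain ⟨a, hab, ha⟩ := hs.exists_le_minimal hb
  exact ⟨a, ha, hab⟩

theorem exists_rat_dotProduct_of_mem_rationalFunctionals {ι : Type*} [Fintype ι] [DecidableEq ι]
    {h : (ι → ℚ) →ₗ[ℚ] ℝ} (hh : h ∈ rationalFunctionals (ι → ℚ)) :
    ∃ ν : ι → ℚ, (∀ j, (ν j : ℝ) = h (Pi.single j 1)) ∧ ∀ z, ((ν ⬝ᵥ z : ℚ) : ℝ) = h z := by
  choose ν hν using fun j => hh (Pi.single j 1)
  refine ⟨ν, hν, fun z => ?_⟩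
  rw [← (Pi.basisFun ℚ ι).constr_self ℝ h]
  simp [Module.Basis.constr_apply_fintype, dotProduct, hν, Rat.smul_def, mul_comm]

theorem mem_convexHull_rat_stdSimplex_nonneg_of_finite {ι : Type*} [Fintype ι] {A : Set (ι → ℚ)}
    (hA : A.Finite) {w : ι → ℝ} (hw : w ∈ stdSimplex ℝ ι)
    (hwA : ∀ a ∈ A, 0 ≤ w ⬝ᵥ fun j => (a j : ℝ)) :
    w ∈ convexHull ℝ
      ((fun ν j => (ν j : ℝ)) '' {ν ∈ stdSimplex ℚ ι | ∀ a ∈ A, 0 ≤ ν ⬝ᵥ a}) := by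
  classical
  let f := Fintype.linearCombination ℚ w
  have hf : ∀ z, f z = w ⬝ᵥ fun j => (z j : ℝ) := fun z => by
    simp [f, Fintype.linearCombination_apply, Rat.smul_def, dotProduct, mul_comm]
  have hf_one : f 1 = 1 := by simpa [hf, dotProduct] using hw.2
  have hf_nonneg : ∀ a ∈ A ∪ range fun j => Pi.single j 1, 0 ≤ f a := by
    rintro _ (ha | ⟨j, rfl⟩)
    · exact (hwA _ ha).trans_eq (hf _).symm
    · simpa [f] using hw.1 j
  let coords := ((Pi.basisFun ℚ ι).constr ℝ : (ι → ℝ) ≃ₗ[ℝ] _).symm.toLinearMap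
  have hcoords : coords f = w := by
    ext j
    simp [coords, f]
  have hhull := mem_image_of_mem coords
    (mem_convexHull_rationalFunctionals_nonneg hf_one (hA.union (finite_range _)) hf_nonneg)
  rw [LinearMap.image_convexHull, hcoords] at hhull
  refine convexHull_mono ?_ hhull
  rintro _ ⟨h, ⟨hrat, hone, hnonneg⟩, rfl⟩
  obtain ⟨ν, hν, hνz⟩ := exists_rat_dotProduct_of_mem_rationalFunctionals hrat
  refine ⟨ν, ⟨⟨fun j => ?_, ?_⟩, fun a ha => ?_⟩, ?_⟩
  · exact_mod_cast (hnonneg _ (.inr ⟨j, rfl⟩)).trans_eq (hν j).symm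
  · rw [← dotProduct_one]
    exact_mod_cast (hνz 1).trans hone
  · exact_mod_cast (hnonneg a (.inl ha)).trans_eq (hνz a).symm
  · ext j
    simp [coords, hν]

theorem mem_convexHull_rat_stdSimplex_nonneg_of_isPWO {ι : Type*} [Fintype ι] {Z : Set (ι → ℚ)}
    (hZ : Z.IsPWO) {w : ι → ℝ} (hw : w ∈ stdSimplex ℝ ι)
    (hwZ : ∀ z ∈ Z, 0 ≤ w ⬝ᵥ fun j => (z j : ℝ)) :
    w ∈ convexHull ℝ
      ((fun ν j => (ν j : ℝ)) '' {ν ∈ stdSimplex ℚ ι | ∀ z ∈ Z, 0 ≤ ν ⬝ᵥ z}) := by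
  obtain ⟨A, hAZ, hA, hle⟩ := exists_finite_subset_forall_exists_le hZ
  refine convexHull_mono (image_mono ?_)
    (mem_convexHull_rat_stdSimplex_nonneg_of_finite hA hw fun a ha => hwZ a (hAZ ha))
  refine fun ν hν => ⟨hν.1, fun z hz => ?_⟩
  obtain ⟨a, ha, haz⟩ := hle z hz
  exact (hν.2 a ha).trans (dotProduct_le_dotProduct_of_nonneg_left haz hν.1.1)

theorem mem_convexHull_rat_nonneg_of_isPWO {E ι T : Type*} [AddCommGroup E] [Module ℝ E]
    [Module ℚ E] [Finite ι] (v : ι → E) (φ : T → E →ᵃ[ℝ] ℝ) {z : T → ι → ℚ}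
    (hz : ∀ t j, φ t (v j) = z t j) (hpwo : ∀ j, (range fun t => z t j).IsPWO)
    {x : E} (hx : x ∈ convexHull ℝ (range v)) (hφx : ∀ t, 0 ≤ φ t x) :
    x ∈ convexHull ℝ {q ∈ convexHull ℚ (range v) | ∀ t, 0 ≤ φ t q} := by
  have := Fintype.ofFinite ι
  have hZ : (range z).IsPWO := (IsPWO.pi hpwo).mono (by rintro _ ⟨t, rfl⟩ j -; exact ⟨t, rfl⟩)
  have hφ : ∀ t (w : ι → ℝ), ∑ j, w j = 1 →
      φ t (Fintype.linearCombination ℝ v w) = w ⬝ᵥ fun j => (z t j : ℝ) := fun t w hw => by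
    simp only [affineMap_linearCombination (φ t) v hw, hz]
  rw [convexHull_range_eq_image_stdSimplex] at hx
  obtain ⟨w, hw, rfl⟩ := hx
  have hhull := mem_image_of_mem (Fintype.linearCombination ℝ v)
    (mem_convexHull_rat_stdSimplex_nonneg_of_isPWO hZ hw
      (forall_mem_range.2 fun t => (hφx t).trans_eq (hφ t w hw.2)))
  rw [LinearMap.image_convexHull] at hhull
  refine convexHull_mono ?_ hhull
  rintro _ ⟨_, ⟨ν, ⟨hν, hνz⟩, rfl⟩, rfl⟩
  have hν_sum : ∑ j, (ν j : ℝ) = 1 := by exact_mod_cast hν.2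
  refine ⟨?_, fun t => ?_⟩
  · rw [convexHull_range_eq_image_stdSimplex]
    exact ⟨ν, hν, by simp [Fintype.linearCombination_apply, Rat.cast_smul_eq_qsmul]⟩
  · rw [hφ t _ hν_sum]
    have hνzt := hνz _ ⟨t, rfl⟩
    simp only [dotProduct] at hνzt ⊢
    exact_mod_cast hνzt

/-- The families of reals that become families of integers after multiplication by a common
positive integer. Being a `ℚ`-subspace, they are stable under rational convex combinations. -/
def boundedDenominators (T : Type*) : Submodule ℚ (T → ℝ) where
  carrier := {y | ∃ m : ℕ, 0 < m ∧ ∀ t, ∃ z : ℤ, (m : ℝ) * y t = z}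
  zero_mem' := ⟨1, one_pos, fun _ => ⟨0, by simp⟩⟩
  add_mem' := by
    rintro x y ⟨m, hm, hmx⟩ ⟨n, hn, hny⟩
    refine ⟨m * n, mul_pos hm hn, fun t => ?_⟩
    obtain ⟨⟨a, ha⟩, ⟨b, hb⟩⟩ := And.intro (hmx t) (hny t)
    refine ⟨n * a + m * b, ?_⟩
    push_cast [← ha, ← hb, Pi.add_apply]
    ring
  smul_mem' := by
    rintro c y ⟨m, hm, hmy⟩
    refine ⟨c.den * m, mul_pos c.den_pos hm, fun t => ?_⟩
    obtain ⟨a, ha⟩ := hmy t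
    have hc : (c.den : ℝ) * c = c.num := by exact_mod_cast c.den_mul_eq_num
    refine ⟨c.num * a, ?_⟩
    push_cast [← ha, ← hc, Pi.smul_apply, Rat.smul_def]
    ring

theorem exists_common_denominator {ι T : Type*} [Finite ι] {y : ι → T → ℝ}
    (hy : ∀ i, y i ∈ boundedDenominators T) :
    ∃ m : ℕ, 0 < m ∧ ∀ t i, ∃ z : ℤ, (m : ℝ) * y i t = z := by
  have := Fintype.ofFinite ι
  choose m hm z hz using hy
  refine ⟨∏ i, m i, Finset.prod_pos fun i _ => hm i, fun t i => ?_⟩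
  obtain ⟨e, he⟩ := Finset.dvd_prod_of_mem m (Finset.mem_univ i)
  refine ⟨e * z i t, ?_⟩
  push_cast [he, ← hz]
  ring

theorem mem_boundedDenominators_of_mem_convexHull_rat {E T : Type*} [AddCommGroup E] [Module ℝ E]
    [Module ℚ E] (φ : T → E →ᵃ[ℝ] ℝ) {s : Set E}
    (hs : ∀ v ∈ s, (fun t => φ t v) ∈ boundedDenominators T) {q : E} (hq : q ∈ convexHull ℚ s) :
    (fun t => φ t q) ∈ boundedDenominators T := by
  refine convexHull_min (t := {q | (fun t => φ t q) ∈ boundedDenominators T}) hs ?_ hq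
  intro x hx y hy a b _ _ hab
  have hφ : (fun t => φ t (a • x + b • y)) = a • (fun t => φ t x) + b • fun t => φ t y := by
    ext t
    have hab' : (a : ℝ) + b = 1 := by exact_mod_cast hab
    simp only [← Rat.cast_smul_eq_qsmul ℝ, Convex.combo_affine_apply hab', Pi.add_apply,
      Pi.smul_apply]
  rw [mem_ofPred_eq, hφ]
  exact add_mem (Submodule.smul_mem _ a hx) (Submodule.smul_mem _ b hy)

theorem exists_isPWO_rat_of_bddBelow_of_mem_boundedDenominators {T : Type*} {y : T → ℝ}
    (hbdd : BddBelow (range y)) (hy : y ∈ boundedDenominators T) :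
    ∃ q : T → ℚ, (∀ t, y t = q t) ∧ (range q).IsPWO := by
  obtain ⟨m, hm, hmy⟩ := hy
  obtain ⟨c, hc⟩ := hbdd
  choose z hz using hmy
  have hz_bdd : BddBelow (range z) := ⟨⌊m * c⌋, forall_mem_range.2 fun t => by
    rw [← Int.floor_intCast (R := ℝ) (z t), ← hz]
    gcongr
    exact hc ⟨t, rfl⟩⟩
  refine ⟨fun t => z t / m, fun t => ?_, ?_⟩
  · push_cast [← hz]
    rw [mul_div_cancel_left₀ _ (Nat.cast_ne_zero.2 hm.ne')]
  · have hmono : Monotone fun k : ℤ => (k / m : ℚ) := fun k l hkl => by dsimp only; gcongr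
    rw [← Function.comp_def (fun k : ℤ => (k / m : ℚ)) z, range_comp]
    exact hz_bdd.isWF.isPWO.image_of_monotone hmono

theorem rational_convex_decomposition_on_polytope_general {E ι T : Type*} [AddCommGroup E]
    [Module ℝ E] [Module ℚ E] [Finite ι] (v : ι → E) (φ : T → E →ᵃ[ℝ] ℝ)
    (hlow : ∀ j, BddBelow (range fun t => φ t (v j)))
    (hint : ∀ j, ∃ m : ℕ, 0 < m ∧ ∀ t, ∃ z : ℤ, (m : ℝ) * φ t (v j) = z)
    {x : E} (hx : x ∈ convexHull ℝ (range v)) (hφx : ∀ t, 0 ≤ φ t x) :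
    ∃ (r : ℕ) (q : Fin r → E) (a : Fin r → ℝ),
      (∀ i, q i ∈ convexHull ℚ (range v)) ∧ (∀ t i, 0 ≤ φ t (q i)) ∧
      (∀ i, 0 < a i) ∧ (∑ i, a i = 1) ∧ (x = ∑ i, a i • q i) ∧
      ∃ m' : ℕ, 0 < m' ∧ ∀ t i, ∃ z : ℤ, (m' : ℝ) * φ t (q i) = (z : ℝ) := by
  choose z hz hpwo using fun j =>
    exists_isPWO_rat_of_bddBelow_of_mem_boundedDenominators (hlow j) (hint j)
  obtain ⟨r, q, a, hq, ha, hsum, hxq⟩ := exists_fin_pos_convexCombination <|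
    mem_convexHull_rat_nonneg_of_isPWO v φ (z := fun t j => z j t) (fun t j => hz j t) hpwo hx hφx
  have hden := fun i =>
    mem_boundedDenominators_of_mem_convexHull_rat φ (forall_mem_range.2 hint) (hq i).1
  exact ⟨r, q, a, fun i => (hq i).1, fun t i => (hq i).2 t, ha, hsum, hxq,
    exists_common_denominator hden⟩

/-- Abstract "moreover" part of Proposition 3.11: let `P` be the convex hull of rational
points `v_1, …, v_p` in `ℝ^d`, and let `φ_t` (`t ∈ T`) be affine maps with `φ_t(v_j) ≥ -n`
and `m · φ_t(v_j) ∈ ℤ`. If `x ∈ P` satisfies `φ_t(x) ≥ 0` for all `t`, then `x` is a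
positive convex combination of rational points `q_i ∈ P` with `φ_t(q_i) ≥ 0` for all `t, i`,
and there is a positive integer `m'` with `m' · φ_t(q_i) ∈ ℤ` for all `t, i`. -/
theorem rational_convex_decomposition_on_polytope (d m n p : ℕ) (hm : 0 < m) (hn : 0 < n)
    (v : Fin p → Fin d → ℚ)
    (P : Set (Fin d → ℝ)) (hP : P = convexHull ℝ (Set.range fun j => fun k => ((v j k : ℝ))))
    (T : Type*) (φ : T → ((Fin d → ℝ) →ᵃ[ℝ] ℝ))
    (hlow : ∀ t j, -(n : ℝ) ≤ φ t (fun k => ((v j k : ℝ))))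
    (hint : ∀ t j, ∃ z : ℤ, (m : ℝ) * φ t (fun k => ((v j k : ℝ))) = (z : ℝ)) :
    ∀ x ∈ P, (∀ t, 0 ≤ φ t x) →
      ∃ (r : ℕ) (q : Fin r → Fin d → ℚ) (a : Fin r → ℝ),
        (∀ i, (fun k => ((q i k : ℝ))) ∈ P) ∧
        (∀ t i, 0 ≤ φ t (fun k => ((q i k : ℝ)))) ∧
        (∀ i, 0 < a i) ∧ (∑ i, a i = 1) ∧
        (x = ∑ i, a i • (fun k => ((q i k : ℝ)) : Fin d → ℝ)) ∧
        ∃ m' : ℕ, 0 < m' ∧ ∀ t i, ∃ z : ℤ, (m' : ℝ) * φ t (fun k => ((q i k : ℝ))) = (z : ℝ) := by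
  subst hP
  intro x hx hφx
  obtain ⟨r, q, a, hq, hrest⟩ := rational_convex_decomposition_on_polytope_general _ φ
    (fun j => ⟨-n, forall_mem_range.2 fun t => hlow t j⟩)
    (fun j => ⟨m, hm, fun t => hint t j⟩) hx hφx
  choose q' hq' using fun i =>
    exists_rat_coords_of_mem_convexHull (forall_mem_range.2 fun j => ⟨v j, rfl⟩) (hq i)
  obtain rfl : (fun i k => (q' i k : ℝ)) = q := funext hq'
  exact ⟨r, q', a, fun i => convexHull_rat_subset_convexHull_real _ (hq i), hrest⟩
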